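/- arXiv:2409.04986 — 3 statements merged into one kernel-verified Lean document; each statement's English description precedes it below -/
import Mathlib

section
/- Theorem 1 (convergence of three-client DynamicFL): Let η ∈ (0,1), let k ≥ 1 be the number of high-frequency local steps per round and r ≥ 0 the number of rounds. Define the DynamicFL iteration as follows: at round t (with current parameter θ_{t-1}), the high-frequency group iterate is θ_{1&2,0} = θ_{t-1} and for ℓ = 1,…,k, θ_{1&2,ℓ} = Σ_{i=1}^{2} (n_i/(n_1+n_2))·( θ_{1&2,ℓ-1} − η(θ_{1&2,ℓ-1} − z̄_i) ); client 3's iterate is θ_{3,0} = θ_{t-1} and θ_{3,ℓ} = θ_{3,ℓ-1} − η(θ_{3,ℓ-1} − z̄_3) for ℓ = 1,…,k; and the round ends with θ_t = ((n_1+n_2)/n)·θ_{1&2,k} + (n_3/n)·θ_{3,k}. Then for every initial θ_0 ∈ ℝ, after r rounds the parameter satisfies θ_r = θ* + (1−η)^{k·r}·(θ_0 − θ*), where θ* = Σ_{i=1}^{3} λ_i z̄_i. -/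
/-! Every local loss is a quadratic with curvature one, so each gradient step contracts the distance
to its minimiser by the factor `1 - η`. The high-frequency group behaves as a single client whose
minimiser is the pooled mean of clients 1 and 2, hence `k` local steps give an exact closed form for
both groups (`gradientStep_iterate`) with the same factor `(1 - η) ^ k`. The server's weighted
average of the two minimisers is `θ*`, so a round is the affine contraction
`x ↦ θ* + (1 - η) ^ k * (x - θ*)`, and `r` rounds multiply the factors. -/

/-- Closed form of `k` gradient steps on a unit-curvature quadratic with minimiser `c`. The
recursion is assumed only for the first `k` steps. -/
lemma gradientStep_iterate (η c : ℝ) (u : ℕ → ℝ) (k : ℕ)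
    (hstep : ∀ ℓ < k, u (ℓ + 1) = u ℓ - η * (u ℓ - c)) :
    u k = c + (1 - η) ^ k * (u 0 - c) := by
  induction k with
  | zero => simp
  | succ m ih =>
    rw [hstep m (Nat.lt_succ_self m), ih fun ℓ hℓ => hstep ℓ (Nat.lt_succ_of_lt hℓ)]
    ring

/-- **Theorem 1 (convergence of three-client DynamicFL).**
With learning rate `η ∈ (0,1)`, `k ≥ 1` high-frequency local steps per round,
three clients holding `n_i ≥ 1` data points with empirical means `z̄_i`,
the DynamicFL iterate after `r` rounds satisfies
`θ_r = θ* + (1−η)^(k·r) · (θ_0 − θ*)`, where `θ* = Σ λ_i z̄_i`. -/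
theorem dynamicFL_convergence
    (n1 n2 n3 : ℕ) (hn1 : 1 ≤ n1) (hn2 : 1 ≤ n2) (hn3 : 1 ≤ n3)
    (z1 z2 z3 : ℕ → ℝ)
    (zbar1 zbar2 zbar3 : ℝ)
    (hz1 : zbar1 = (∑ j ∈ Finset.range n1, z1 j) / n1)
    (hz2 : zbar2 = (∑ j ∈ Finset.range n2, z2 j) / n2)
    (hz3 : zbar3 = (∑ j ∈ Finset.range n3, z3 j) / n3)
    (θstar : ℝ)
    (hθstar : θstar = ((n1 : ℝ) / (n1 + n2 + n3)) * zbar1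
        + ((n2 : ℝ) / (n1 + n2 + n3)) * zbar2
        + ((n3 : ℝ) / (n1 + n2 + n3)) * zbar3)
    (η : ℝ) (hη0 : 0 < η) (hη1 : η < 1)
    (k : ℕ) (hk : 1 ≤ k)
    (θ : ℕ → ℝ)
    (θ12 θ3 : ℕ → ℕ → ℝ)
    -- at the beginning of round `t+1` (current parameter `θ t`) both groups start from `θ t`
    (h12init : ∀ t : ℕ, θ12 t 0 = θ t)
    (h3init : ∀ t : ℕ, θ3 t 0 = θ t)
    -- high-frequency group: one local step and immediate weighted aggregation, for ℓ = 1,…,k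
    (h12step : ∀ t : ℕ, ∀ ℓ < k,
        θ12 t (ℓ + 1) =
          ((n1 : ℝ) / (n1 + n2)) * (θ12 t ℓ - η * (θ12 t ℓ - zbar1))
          + ((n2 : ℝ) / (n1 + n2)) * (θ12 t ℓ - η * (θ12 t ℓ - zbar2)))
    -- client 3: k local gradient-descent steps
    (h3step : ∀ t : ℕ, ∀ ℓ < k,
        θ3 t (ℓ + 1) = θ3 t ℓ - η * (θ3 t ℓ - zbar3))
    -- server aggregation at the end of the round
    (hagg : ∀ t : ℕ,
        θ (t + 1) = (((n1 : ℝ) + n2) / (n1 + n2 + n3)) * θ12 t k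
          + ((n3 : ℝ) / (n1 + n2 + n3)) * θ3 t k) :
    ∀ r : ℕ, θ r = θstar + (1 - η) ^ (k * r) * (θ 0 - θstar) := by
  have h1 : (0 : ℝ) < n1 := by exact_mod_cast hn1
  have h2 : (0 : ℝ) < n2 := by exact_mod_cast hn2
  have h3 : (0 : ℝ) < n3 := by exact_mod_cast hn3
  have h12 : (n1 : ℝ) + n2 ≠ 0 := by positivity
  have h123 : (n1 : ℝ) + n2 + n3 ≠ 0 := by positivity
  have hround : ∀ t, θ (t + 1) = θstar + (1 - η) ^ k * (θ t - θstar) := by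
    intro t
    -- the high-frequency group descends towards the pooled mean of clients 1 and 2
    have e12 := gradientStep_iterate η ((n1 * zbar1 + n2 * zbar2) / (n1 + n2)) (θ12 t) k
      (fun ℓ hℓ => by
        rw [h12step t ℓ hℓ]
        field_simp
        ring)
    have e3 := gradientStep_iterate η zbar3 (θ3 t) k (h3step t)
    rw [hagg t, e12, e3, h12init, h3init, hθstar]
    field_simp
    ring
  intro r
  induction r with
  | zero => simp
  | succ r ih =>
    rw [hround r, ih, Nat.mul_succ, pow_add]
    ring
end

section
/- Equal rate of DynamicFL and FedSGD (Theorem 1, equivalence form): With the same learning rate η ∈ (0,1) and the same initial parameter θ_0 ∈ ℝ, the three-client DynamicFL parameter after r rounds of k high-frequency steps each equals the FedSGD parameter after k·r steps; that is, θ^{DynamicFL}_r = θ^{FedSGD}_{k·r} = θ* + (1−η)^{k·r}·(θ_0 − θ*), so the two algorithms have the same rate of convergence at the same number of system-wide steps. -/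
/-!
Every iteration involved has the form `x ↦ x - η (x - c)`, whose `ℓ`-th iterate is
`c + (1 - η) ^ ℓ (x₀ - c)` (`affine_iterate`). For FedSGD, `c = θ*`, since the gradient of a local
loss is `θ - z̄ᵢ` (`hasDerivAt_localLoss`) and the weights sum to one. Clients 1 and 2 together
contract towards the weighted mean of `z̄₁, z̄₂`, and client 3 towards `z̄₃`, both by the same factor
`(1 - η) ^ k` per round; averaging these closed forms is linear, so one round contracts towards
`θ*` by `(1 - η) ^ k`, exactly as `k` FedSGD steps do.
-/

/-- The recursion is only assumed for the first `k` steps, as for the inner loop of a round. -/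
lemma affine_iterate {η c : ℝ} {k : ℕ} {x : ℕ → ℝ}
    (h : ∀ ℓ < k, x (ℓ + 1) = x ℓ - η * (x ℓ - c)) :
    ∀ ℓ ≤ k, x ℓ = c + (1 - η) ^ ℓ * (x 0 - c) := by
  intro ℓ
  induction ℓ with
  | zero => intro _; ring
  | succ m ih =>
    intro hm
    rw [h m hm, ih (by omega)]
    ring

lemma hasDerivAt_localLoss {n : ℕ} (hn : 1 ≤ n) (z : ℕ → ℝ) (θ : ℝ) :
    HasDerivAt (fun θ : ℝ => (1 / (n : ℝ)) * ∑ j ∈ Finset.range n, (1 / 2) * (θ - z j) ^ 2)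
      (θ - (∑ j ∈ Finset.range n, z j) / n) θ := by
  have hn0 : (n : ℝ) ≠ 0 := by positivity
  have hterm : ∀ j ∈ Finset.range n,
      HasDerivAt (fun θ : ℝ => (1 / 2) * (θ - z j) ^ 2) (θ - z j) θ := by
    intro j _
    have h := (((hasDerivAt_id θ).sub_const (z j)).pow 2).const_mul (1 / 2 : ℝ)
    refine h.congr_deriv ?_
    simp
  refine ((HasDerivAt.fun_sum hterm).const_mul (1 / (n : ℝ))).congr_deriv ?_
  rw [Finset.sum_sub_distrib, Finset.sum_const, Finset.card_range, nsmul_eq_mul]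
  field_simp

/-- **Equal rate of DynamicFL and FedSGD (Theorem 1, equivalence form).**
With the same learning rate `η ∈ (0,1)` and the same initial parameter,
the DynamicFL parameter after `r` rounds of `k` high-frequency steps equals
the FedSGD parameter after `k·r` steps, and both equal
`θ* + (1−η)^(k·r) (θ_0 − θ*)`. -/
theorem dynamicFL_eq_fedSGD
    (n1 n2 n3 : ℕ) (hn1 : 1 ≤ n1) (hn2 : 1 ≤ n2) (hn3 : 1 ≤ n3)
    (z1 z2 z3 : ℕ → ℝ)
    (zbar1 zbar2 zbar3 : ℝ)
    (hz1 : zbar1 = (∑ j ∈ Finset.range n1, z1 j) / n1)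
    (hz2 : zbar2 = (∑ j ∈ Finset.range n2, z2 j) / n2)
    (hz3 : zbar3 = (∑ j ∈ Finset.range n3, z3 j) / n3)
    (θstar : ℝ)
    (hθstar : θstar = ((n1 : ℝ) / (n1 + n2 + n3)) * zbar1
        + ((n2 : ℝ) / (n1 + n2 + n3)) * zbar2
        + ((n3 : ℝ) / (n1 + n2 + n3)) * zbar3)
    (L1 L2 L3 L : ℝ → ℝ)
    (hL1 : ∀ θ : ℝ, L1 θ = (1 / (n1 : ℝ)) * ∑ j ∈ Finset.range n1, (1 / 2) * (θ - z1 j) ^ 2)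
    (hL2 : ∀ θ : ℝ, L2 θ = (1 / (n2 : ℝ)) * ∑ j ∈ Finset.range n2, (1 / 2) * (θ - z2 j) ^ 2)
    (hL3 : ∀ θ : ℝ, L3 θ = (1 / (n3 : ℝ)) * ∑ j ∈ Finset.range n3, (1 / 2) * (θ - z3 j) ^ 2)
    (hL : ∀ θ : ℝ, L θ = ((n1 : ℝ) / (n1 + n2 + n3)) * L1 θ
        + ((n2 : ℝ) / (n1 + n2 + n3)) * L2 θ
        + ((n3 : ℝ) / (n1 + n2 + n3)) * L3 θ)
    (η : ℝ) (hη0 : 0 < η) (hη1 : η < 1)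
    (k : ℕ) (hk : 1 ≤ k)
    -- DynamicFL iteration
    (θ : ℕ → ℝ)
    (θ12 θ3 : ℕ → ℕ → ℝ)
    (h12init : ∀ t : ℕ, θ12 t 0 = θ t)
    (h3init : ∀ t : ℕ, θ3 t 0 = θ t)
    (h12step : ∀ t : ℕ, ∀ ℓ < k,
        θ12 t (ℓ + 1) =
          ((n1 : ℝ) / (n1 + n2)) * (θ12 t ℓ - η * (θ12 t ℓ - zbar1))
          + ((n2 : ℝ) / (n1 + n2)) * (θ12 t ℓ - η * (θ12 t ℓ - zbar2)))
    (h3step : ∀ t : ℕ, ∀ ℓ < k,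
        θ3 t (ℓ + 1) = θ3 t ℓ - η * (θ3 t ℓ - zbar3))
    (hagg : ∀ t : ℕ,
        θ (t + 1) = (((n1 : ℝ) + n2) / (n1 + n2 + n3)) * θ12 t k
          + ((n3 : ℝ) / (n1 + n2 + n3)) * θ3 t k)
    -- FedSGD iteration with the same initial parameter
    (θf : ℕ → ℝ)
    (hinit : θf 0 = θ 0)
    (hfstep : ∀ ℓ : ℕ, θf (ℓ + 1) = θf ℓ - η * deriv L (θf ℓ)) :
    ∀ r : ℕ, θ r = θf (k * r) ∧
      θf (k * r) = θstar + (1 - η) ^ (k * r) * (θ 0 - θstar) := by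
  have p1 : (0 : ℝ) < n1 := by exact_mod_cast hn1
  have p2 : (0 : ℝ) < n2 := by exact_mod_cast hn2
  have p3 : (0 : ℝ) < n3 := by exact_mod_cast hn3
  have hs : (n1 : ℝ) + n2 + n3 ≠ 0 := by positivity
  have hs12 : (n1 : ℝ) + n2 ≠ 0 := by positivity
  have hderiv : ∀ x, deriv L x = x - θstar := by
    intro x
    obtain rfl := funext hL1
    obtain rfl := funext hL2
    obtain rfl := funext hL3
    obtain rfl := funext hL
    have h := (((hasDerivAt_localLoss hn1 z1 x).const_mul ((n1 : ℝ) / (n1 + n2 + n3))).fun_add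
      ((hasDerivAt_localLoss hn2 z2 x).const_mul ((n2 : ℝ) / (n1 + n2 + n3)))).fun_add
      ((hasDerivAt_localLoss hn3 z3 x).const_mul ((n3 : ℝ) / (n1 + n2 + n3)))
    rw [h.deriv, ← hz1, ← hz2, ← hz3, hθstar]
    field_simp
    ring
  have hf : ∀ ℓ, θf ℓ = θstar + (1 - η) ^ ℓ * (θ 0 - θstar) := by
    intro ℓ
    rw [← hinit]
    exact affine_iterate (fun m _ => by rw [hfstep, hderiv]) ℓ le_rfl
  have h12 : ∀ t, θ12 t k = (n1 * zbar1 + n2 * zbar2) / (n1 + n2)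
      + (1 - η) ^ k * (θ t - (n1 * zbar1 + n2 * zbar2) / (n1 + n2)) := by
    intro t
    rw [← h12init t]
    refine affine_iterate (fun m hm => ?_) k le_rfl
    rw [h12step t m hm]
    field_simp
    ring
  have h3 : ∀ t, θ3 t k = zbar3 + (1 - η) ^ k * (θ t - zbar3) := by
    intro t
    rw [← h3init t]
    exact affine_iterate (h3step t) k le_rfl
  have hround : ∀ t, θ (t + 1) = θstar + (1 - η) ^ k * (θ t - θstar) := by
    intro t
    rw [hagg, h12, h3, hθstar]
    field_simp
    ring
  have hd : ∀ r, θ r = θstar + (1 - η) ^ (k * r) * (θ 0 - θstar) := by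
    intro r
    induction r with
    | zero => simp
    | succ r ih =>
      rw [hround, ih, Nat.mul_succ, pow_add]
      ring
  exact fun r => ⟨(hd r).trans (hf _).symm, hf _⟩
end

section
/- Geometric error contraction and convergence: Under the three-client DynamicFL iteration with learning rate η ∈ (0,1), k ≥ 1 high-frequency steps per round, and initial parameter θ_0 ∈ ℝ, the error satisfies |θ_r − θ*| = (1−η)^{k·r}·|θ_0 − θ*| for every r ≥ 0, and hence θ_r → θ* as r → ∞. -/
/-!
Within a round, the size-weighted average of the group iterate and of client 3's iterate obeys
the gradient step for the pooled mean `θ*`, since every local loss is quadratic with the same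
curvature. Each step therefore multiplies its distance to `θ*` by exactly `1 - η`, a round of `k`
steps multiplies it by `(1 - η) ^ k`, and convergence follows from `0 < 1 - η < 1`.
-/

/-- **Geometric error contraction and convergence.** Under the three-client
DynamicFL iteration with `η ∈ (0,1)` and `k ≥ 1` high-frequency steps per round,
`|θ_r − θ*| = (1−η)^(k·r) |θ_0 − θ*|` for every `r`, and hence `θ_r → θ*`. -/
theorem dynamicFL_geometric_contraction_and_convergence
    (n1 n2 n3 : ℕ) (hn1 : 1 ≤ n1) (hn2 : 1 ≤ n2) (hn3 : 1 ≤ n3)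
    (z1 z2 z3 : ℕ → ℝ)
    (zbar1 zbar2 zbar3 : ℝ)
    (hz1 : zbar1 = (∑ j ∈ Finset.range n1, z1 j) / n1)
    (hz2 : zbar2 = (∑ j ∈ Finset.range n2, z2 j) / n2)
    (hz3 : zbar3 = (∑ j ∈ Finset.range n3, z3 j) / n3)
    (θstar : ℝ)
    (hθstar : θstar = ((n1 : ℝ) / (n1 + n2 + n3)) * zbar1
        + ((n2 : ℝ) / (n1 + n2 + n3)) * zbar2
        + ((n3 : ℝ) / (n1 + n2 + n3)) * zbar3)
    (η : ℝ) (hη0 : 0 < η) (hη1 : η < 1)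
    (k : ℕ) (hk : 1 ≤ k)
    (θ : ℕ → ℝ)
    (θ12 θ3 : ℕ → ℕ → ℝ)
    (h12init : ∀ t : ℕ, θ12 t 0 = θ t)
    (h3init : ∀ t : ℕ, θ3 t 0 = θ t)
    (h12step : ∀ t : ℕ, ∀ ℓ < k,
        θ12 t (ℓ + 1) =
          ((n1 : ℝ) / (n1 + n2)) * (θ12 t ℓ - η * (θ12 t ℓ - zbar1))
          + ((n2 : ℝ) / (n1 + n2)) * (θ12 t ℓ - η * (θ12 t ℓ - zbar2)))
    (h3step : ∀ t : ℕ, ∀ ℓ < k,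
        θ3 t (ℓ + 1) = θ3 t ℓ - η * (θ3 t ℓ - zbar3))
    (hagg : ∀ t : ℕ,
        θ (t + 1) = (((n1 : ℝ) + n2) / (n1 + n2 + n3)) * θ12 t k
          + ((n3 : ℝ) / (n1 + n2 + n3)) * θ3 t k) :
    (∀ r : ℕ, |θ r - θstar| = (1 - η) ^ (k * r) * |θ 0 - θstar|) ∧
      Filter.Tendsto θ Filter.atTop (nhds θstar) := by
  have p1 : (0 : ℝ) < n1 := by exact_mod_cast hn1
  have p2 : (0 : ℝ) < n2 := by exact_mod_cast hn2
  have p3 : (0 : ℝ) < n3 := by exact_mod_cast hn3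
  have h12 : (n1 : ℝ) + n2 ≠ 0 := by positivity
  have hN : (n1 : ℝ) + n2 + n3 ≠ 0 := by positivity
  have inner : ∀ t ℓ : ℕ, ℓ ≤ k →
      (((n1 : ℝ) + n2) / (n1 + n2 + n3)) * θ12 t ℓ + ((n3 : ℝ) / (n1 + n2 + n3)) * θ3 t ℓ - θstar
        = (1 - η) ^ ℓ * (θ t - θstar) := by
    intro t ℓ
    induction ℓ with
    | zero =>
      intro _
      rw [h12init, h3init]
      field_simp
    | succ ℓ ih =>
      intro hℓ
      rw [pow_succ', mul_assoc, ← ih (by omega), h12step t ℓ (by omega), h3step t ℓ (by omega),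
        hθstar]
      field_simp
      ring
  have err : ∀ r : ℕ, θ r - θstar = (1 - η) ^ (k * r) * (θ 0 - θstar) := by
    intro r
    induction r with
    | zero => simp
    | succ r ih => rw [hagg, inner r k le_rfl, ih, Nat.mul_succ, pow_add]; ring
  have hpos : 0 < 1 - η := by linarith
  refine ⟨fun r => ?_, ?_⟩
  · rw [err, abs_mul, abs_of_pos (pow_pos hpos _)]
  · have hlt : (1 - η) ^ k < 1 := pow_lt_one₀ hpos.le (by linarith) (by omega)
    have hlim := ((tendsto_pow_atTop_nhds_zero_of_lt_one (pow_pos hpos k).le hlt).mul_const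
      (θ 0 - θstar)).add_const θstar
    rw [zero_mul, zero_add] at hlim
    refine hlim.congr fun r => ?_
    rw [← pow_mul, ← err, sub_add_cancel]
end
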